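/- arXiv:1903.08834 — 3 statements merged into one kernel-verified Lean document; each statement's English description precedes it below -/
import Mathlib

section
/- Let R be a Noetherian unique factorization domain, let ℓ ≥ 1, let X be a finitely generated R-module of rank ℓ, let F be a free R-module of rank ℓ, and let λ : X → F be an R-linear map whose kernel equals the torsion submodule T₁(X) and whose cokernel E = F/λ(X) is torsion. Let I be a rank-ℓ submodule of X such that λ restricted to I is injective, λ(I) is contained in a free rank-ℓ submodule J of F, and B = J/λ(I) is pseudo-null. Then for every prime ideal P of R of height one, the localizations (F/J)_P, (X/I)_P, T₁(X)_P, and E_P all have finite length over R_P, and length_{R_P}((F/J)_P) + length_{R_P}(T₁(X)_P) = length_{R_P}((X/I)_P) + length_{R_P}(E_P); moreover, length_{R_P}(T₁(X)_P) ≤ length_{R_P}((X/I)_P) for every such P (so that the characteristic ideal of T₁(X) divides that of X/I). -/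
noncomputable def fracRank (R : Type*) [CommRing R] [IsDomain R] (M : Type*) [AddCommGroup M]
    [Module R M] : Cardinal :=
  Module.rank (FractionRing R) (TensorProduct R (FractionRing R) M)

def IsPseudoNull (R : Type*) [CommRing R] (M : Type*) [AddCommGroup M] [Module R M] : Prop :=
  ∀ (P : Ideal R) [hP : P.IsPrime],
    Order.height (⟨P, hP⟩ : PrimeSpectrum R) ≤ 1 →
      Subsingleton (LocalizedModule P.primeCompl M)

/-- The length of the localization of `M` at the prime `P`, defined as the supremum of lengths
of chains of submodules of the localized module. -/
noncomputable def locLength (R : Type*) [CommRing R] (M : Type*) [AddCommGroup M] [Module R M]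
    (P : Ideal R) [P.IsPrime] : ℕ∞ :=
  Order.height (⊤ : Submodule (Localization.AtPrime P) (LocalizedModule P.primeCompl M))

def locFiniteLength (R : Type*) [CommRing R] (M : Type*) [AddCommGroup M] [Module R M]
    (P : Ideal R) [P.IsPrime] : Prop :=
  IsFiniteLength (Localization.AtPrime P) (LocalizedModule P.primeCompl M)

/-! Let `P` have height at most one. Since `I` meets `ker λ` trivially, there is a four-term exact
sequence `0 → ker λ → X / I → F / λ(I) → coker λ → 0`. The quotient `F / λ(I)` is an extension of
`F / J` by `J / λ(I)`, and the latter vanishes at `P`, so after localization at `P` it has the same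
length as `F / J`; additivity of length in the four-term sequence is then the claimed equality.
The modules `F / J`, `ker λ` and `coker λ` are finitely generated and torsion, hence of finite
length over the Noetherian local ring `R_P` of dimension at most one, and the equality transfers
finiteness to `X / I`. -/

section FiniteLength

theorem isFiniteLength_of_isTorsion {A M : Type*} [CommRing A] [IsNoetherianRing A]
    [Ring.KrullDimLE 1 A] [AddCommGroup M] [Module A M] [Module.Finite A M]
    (hM : Module.IsTorsion A M) : IsFiniteLength A M := by
  obtain ⟨b, hbM, hb⟩ := Submodule.annihilator_top_inter_nonZeroDivisors hM
  have hArt : IsArtinianRing (A ⧸ Ideal.span {b}) :=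
    isArtinian_of_tower A (isFiniteLength_iff_isNoetherian_isArtinian.mp
      (isFiniteLength_quotient_span_singleton A hb)).2
  have hbM' : Module.IsTorsionBySet A M (Ideal.span {b}) :=
    (Module.isTorsionBySet_span_singleton_iff b).mpr fun x =>
      Submodule.mem_annihilator.mp hbM x trivial
  let : Module (A ⧸ Ideal.span {b}) M := hbM'.module
  have : IsScalarTower A (A ⧸ Ideal.span {b}) M := hbM'.isScalarTower
  have : Module.Finite (A ⧸ Ideal.span {b}) M := .of_restrictScalars_finite A _ _
  have : IsArtinian A M :=
    isArtinian_of_surjective_algebraMap (R := A ⧸ Ideal.span {b}) Ideal.Quotient.mk_surjective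
  exact isFiniteLength_iff_isNoetherian_isArtinian.mpr ⟨inferInstance, inferInstance⟩

theorem isTorsion_localizedModule {R M : Type*} [CommRing R] [AddCommGroup M] [Module R M]
    (S : Submonoid R) (hM : Module.IsTorsion R M) :
    Module.IsTorsion (Localization S) (LocalizedModule S M) := by
  intro x
  induction x using LocalizedModule.induction_on with
  | h m s =>
    obtain ⟨⟨a, ha⟩, ham : a • m = 0⟩ := @hM m
    refine ⟨⟨algebraMap R (Localization S) a, IsLocalization.map_nonZeroDivisors_le S _
      (Submonoid.mem_map_of_mem _ ha)⟩, ?_⟩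
    rw [Submonoid.mk_smul, algebraMap_smul, LocalizedModule.smul'_mk, ham,
      LocalizedModule.zero_mk]

theorem krullDimLE_localization_atPrime {R : Type*} [CommRing R] {n : ℕ} (P : Ideal R) [P.IsPrime]
    (hP : P.height ≤ n) : Ring.KrullDimLE n (Localization.AtPrime P) := by
  rw [Ring.krullDimLE_iff, IsLocalization.AtPrime.ringKrullDim_eq_height P]
  exact_mod_cast hP

theorem locFiniteLength_of_isTorsion {R M : Type*} [CommRing R] [IsNoetherianRing R]
    [AddCommGroup M] [Module R M] [Module.Finite R M] (hM : Module.IsTorsion R M)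
    (P : Ideal R) [P.IsPrime] (hP : P.height ≤ 1) : locFiniteLength R M P :=
  have := krullDimLE_localization_atPrime (n := 1) P hP
  isFiniteLength_of_isTorsion (isTorsion_localizedModule P.primeCompl hM)

end FiniteLength

section LocLength

variable {R M N K L : Type*} [CommRing R] [AddCommGroup M] [Module R M] [AddCommGroup N]
  [Module R N] [AddCommGroup K] [Module R K] [AddCommGroup L] [Module R L]

theorem locLength_eq_length (M : Type*) [AddCommGroup M] [Module R M] (P : Ideal R) [P.IsPrime] :
    locLength R M P = Module.length (Localization.AtPrime P) (LocalizedModule P.primeCompl M) :=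
  (Module.length_eq_height _ _).symm

theorem locLength_ne_top_iff (P : Ideal R) [P.IsPrime] :
    locLength R M P ≠ ⊤ ↔ locFiniteLength R M P := by
  rw [locLength_eq_length, Module.length_ne_top_iff, locFiniteLength]

theorem locLength_eq_add_of_exact {f : M →ₗ[R] N} {g : N →ₗ[R] K} (hf : Function.Injective f)
    (hg : Function.Surjective g) (hfg : Function.Exact f g) (P : Ideal R) [P.IsPrime] :
    locLength R N P = locLength R M P + locLength R K P := by
  simp only [locLength_eq_length]
  exact Module.length_eq_add_of_exact
    (IsLocalizedModule.mapExtendScalars P.primeCompl (LocalizedModule.mkLinearMap P.primeCompl M)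
      (LocalizedModule.mkLinearMap P.primeCompl N) (Localization.AtPrime P) f)
    (IsLocalizedModule.mapExtendScalars P.primeCompl (LocalizedModule.mkLinearMap P.primeCompl N)
      (LocalizedModule.mkLinearMap P.primeCompl K) (Localization.AtPrime P) g)
    (IsLocalizedModule.map_injective P.primeCompl _ _ f hf)
    (IsLocalizedModule.map_surjective P.primeCompl _ _ g hg)
    (IsLocalizedModule.map_exact P.primeCompl _ _ _ f g hfg)

theorem locLength_le_of_injective {f : M →ₗ[R] N} (hf : Function.Injective f) (P : Ideal R)
    [P.IsPrime] : locLength R M P ≤ locLength R N P := by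
  rw [locLength_eq_add_of_exact hf (LinearMap.range f).mkQ_surjective f.exact_map_mkQ_range P]
  exact le_self_add

theorem locLength_add_eq_add_of_exact {f : M →ₗ[R] N} {g : N →ₗ[R] K} {h : K →ₗ[R] L}
    (hf : Function.Injective f) (hfg : Function.Exact f g) (hgh : Function.Exact g h)
    (hh : Function.Surjective h) (P : Ideal R) [P.IsPrime] :
    locLength R K P + locLength R M P = locLength R N P + locLength R L P := by
  have hN : locLength R N P = locLength R M P + locLength R (LinearMap.range g) P :=
    locLength_eq_add_of_exact (g := g.rangeRestrict) hf g.surjective_rangeRestrict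
      (LinearMap.exact_iff.mpr (g.ker_rangeRestrict.trans hfg.linearMap_ker_eq)) P
  have hK : locLength R K P = locLength R (LinearMap.range g) P + locLength R L P :=
    locLength_eq_add_of_exact (f := (LinearMap.range g).subtype) Subtype.val_injective hh
      (LinearMap.exact_iff.mpr (hgh.linearMap_ker_eq.trans (Submodule.range_subtype _).symm)) P
  rw [hN, hK]
  ac_rfl

end LocLength

section Quotients

variable {R X F : Type*} [CommRing R] [AddCommGroup X] [Module R X] [AddCommGroup F] [Module R F]

theorem locLength_quotient_eq_add {A B : Submodule R F} (hAB : A ≤ B) (P : Ideal R) [P.IsPrime] :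
    locLength R (F ⧸ A) P =
      locLength R (B ⧸ A.comap B.subtype) P + locLength R (F ⧸ B) P := by
  refine locLength_eq_add_of_exact (f := Submodule.mapQ (A.comap B.subtype) A B.subtype le_rfl)
    (g := Submodule.factor hAB) ?_ (Submodule.factor_surjective hAB) ?_ P
  · rw [← LinearMap.ker_eq_bot, Submodule.ker_mapQ]
    exact Submodule.mkQ_map_self _
  · rw [LinearMap.exact_iff]
    simp [Submodule.factor, Submodule.ker_mapQ, Submodule.range_mapQ]

theorem injective_mkQ_comp_subtype_ker {f : X →ₗ[R] F} {I : Submodule R X}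
    (hinj : Function.Injective (f.domRestrict I)) :
    Function.Injective (I.mkQ ∘ₗ (LinearMap.ker f).subtype) := by
  rw [← LinearMap.ker_eq_bot, LinearMap.ker_comp, Submodule.ker_mkQ,
    ← Submodule.disjoint_iff_comap_eq_bot, disjoint_comm]
  exact LinearMap.injective_domRestrict_iff.mp hinj

theorem locLength_quotient_map_add_ker (f : X →ₗ[R] F) {I : Submodule R X}
    (hinj : Function.Injective (f.domRestrict I)) (P : Ideal R) [P.IsPrime] :
    locLength R (F ⧸ I.map f) P + locLength R (LinearMap.ker f) P =
      locLength R (X ⧸ I) P + locLength R (F ⧸ LinearMap.range f) P := by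
  refine locLength_add_eq_add_of_exact (f := I.mkQ ∘ₗ (LinearMap.ker f).subtype)
    (g := I.mapQ (I.map f) f (I.le_comap_map f)) (h := Submodule.factor LinearMap.map_le_range)
    (injective_mkQ_comp_subtype_ker hinj) ?_ ?_ (Submodule.factor_surjective _) P
  · rw [LinearMap.exact_iff]
    simp [Submodule.ker_mapQ, LinearMap.range_comp, Submodule.comap_map_eq]
  · rw [LinearMap.exact_iff]
    simp [Submodule.factor, Submodule.ker_mapQ, Submodule.range_mapQ]

theorem isTorsion_quotient_of_rank_eq [IsDomain R] {N : Submodule R F}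
    (hfin : Module.rank R N < Cardinal.aleph0) (hrank : Module.rank R N = Module.rank R F) :
    Module.IsTorsion R (F ⧸ N) := by
  rw [← Module.rank_eq_zero_iff_isTorsion]
  refine Cardinal.eq_of_add_eq_add_right ?_ hfin
  rw [rank_quotient_add_rank_of_isDomain, zero_add, hrank]

end Quotients

theorem statement2_general {R X F : Type*} [CommRing R] [IsNoetherianRing R] [AddCommGroup X]
    [Module R X] [Module.Finite R X] [AddCommGroup F] [Module R F] [Module.Finite R F]
    {f : X →ₗ[R] F} (hker : Module.IsTorsion R (LinearMap.ker f))
    (hcoker : Module.IsTorsion R (F ⧸ LinearMap.range f))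
    {I : Submodule R X} (hinj : Function.Injective (f.domRestrict I))
    {J : Submodule R F} (hJ : Module.IsTorsion R (F ⧸ J)) (hIJ : I.map f ≤ J)
    (P : Ideal R) [P.IsPrime] (hP : P.height ≤ 1)
    (hB : Subsingleton (LocalizedModule P.primeCompl (J ⧸ (I.map f).comap J.subtype))) :
    locFiniteLength R (F ⧸ J) P ∧
    locFiniteLength R (X ⧸ I) P ∧
    locFiniteLength R (LinearMap.ker f) P ∧
    locFiniteLength R (F ⧸ LinearMap.range f) P ∧
    locLength R (F ⧸ J) P + locLength R (LinearMap.ker f) P =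
      locLength R (X ⧸ I) P + locLength R (F ⧸ LinearMap.range f) P ∧
    locLength R (LinearMap.ker f) P ≤ locLength R (X ⧸ I) P := by
  have hFJ : locFiniteLength R (F ⧸ J) P := locFiniteLength_of_isTorsion hJ P hP
  have hK : locFiniteLength R (LinearMap.ker f) P := locFiniteLength_of_isTorsion hker P hP
  have hJI : locLength R (F ⧸ I.map f) P = locLength R (F ⧸ J) P := by
    rw [locLength_quotient_eq_add hIJ P, locLength_eq_length (J ⧸ _), Module.length_eq_zero,
      zero_add]
  have hsum : locLength R (F ⧸ J) P + locLength R (LinearMap.ker f) P =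
      locLength R (X ⧸ I) P + locLength R (F ⧸ LinearMap.range f) P :=
    hJI ▸ locLength_quotient_map_add_ker f hinj P
  have hXI : locLength R (X ⧸ I) P ≠ ⊤ := by
    have hfin := WithTop.add_ne_top.mpr
      ⟨(locLength_ne_top_iff P).mpr hFJ, (locLength_ne_top_iff P).mpr hK⟩
    exact (WithTop.add_ne_top.mp (hsum ▸ hfin)).1
  exact ⟨hFJ, (locLength_ne_top_iff P).mp hXI, hK, locFiniteLength_of_isTorsion hcoker P hP, hsum,
    locLength_le_of_injective (injective_mkQ_comp_subtype_ker hinj) P⟩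

theorem statement2 (R : Type*) [CommRing R] [IsDomain R] [IsNoetherianRing R]
    [UniqueFactorizationMonoid R]
    (ℓ : ℕ) (hℓ : 1 ≤ ℓ)
    (X : Type*) [AddCommGroup X] [Module R X] [Module.Finite R X]
    (F : Type*) [AddCommGroup F] [Module R F] [Module.Free R F]
    (hX : fracRank R X = ℓ) (hF : Module.rank R F = ℓ)
    (lam : X →ₗ[R] F)
    (hker : LinearMap.ker lam = Submodule.torsion R X)
    (hcoker : Module.IsTorsion R (F ⧸ LinearMap.range lam))
    (I : Submodule R X) (hIrank : fracRank R I = ℓ)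
    (hinj : Function.Injective (lam.domRestrict I))
    (J : Submodule R F) [Module.Free R J] (hJrank : Module.rank R J = ℓ)
    (hIJ : Submodule.map lam I ≤ J)
    (hB : IsPseudoNull R (J ⧸ (Submodule.map lam I).comap J.subtype)) :
    ∀ (P : Ideal R) [hP : P.IsPrime], Order.height (⟨P, hP⟩ : PrimeSpectrum R) = 1 →
      locFiniteLength R (F ⧸ J) P ∧
      locFiniteLength R (X ⧸ I) P ∧
      locFiniteLength R (Submodule.torsion R X) P ∧
      locFiniteLength R (F ⧸ LinearMap.range lam) P ∧
      locLength R (F ⧸ J) P + locLength R (Submodule.torsion R X) P =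
        locLength R (X ⧸ I) P + locLength R (F ⧸ LinearMap.range lam) P ∧
      locLength R (Submodule.torsion R X) P ≤ locLength R (X ⧸ I) P := by
  intro P hP h
  have : Module.Finite R F := Module.finite_of_rank_eq_nat hF
  have hJ : Module.IsTorsion R (F ⧸ J) :=
    isTorsion_quotient_of_rank_eq (hJrank ▸ Cardinal.natCast_lt_aleph0) (hJrank.trans hF.symm)
  rw [← hker]
  exact statement2_general (hker ▸ Submodule.torsion_isTorsion) hcoker hinj hJ hIJ P
    ((PrimeSpectrum.height_eq_orderHeight ⟨P, hP⟩).trans h).le (hB P h.le)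
end

section
/- Let R be a Noetherian unique factorization domain, let n ≥ 1, let g₁, …, gₙ be nonzero elements of R, and let θ be a greatest common divisor of g₁, …, gₙ in R. Then the maximal pseudo-null submodule T₂(R/(g₁,…,gₙ)) of the R-module R/(g₁,…,gₙ) equals the image θ·R/(g₁,…,gₙ) of the principal ideal (θ), and multiplication by θ induces an isomorphism of R-modules R/(g₁/θ,…,gₙ/θ) ≅ θ·R/(g₁,…,gₙ). -/
/-- The maximal pseudo-null submodule `T₂(M)`: the submodule of elements whose image in the
localization `M_P` is zero for every prime `P` of height at most 1. -/
noncomputable def maxPseudoNullSubmodule (R : Type*) [CommRing R] (M : Type*) [AddCommGroup M]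
    [Module R M] : Submodule R M :=
  ⨅ (P : Ideal R) (hP : P.IsPrime) (_ : Order.height (⟨P, hP⟩ : PrimeSpectrum R) ≤ 1),
    LinearMap.ker (LocalizedModule.mkLinearMap (@Ideal.primeCompl _ _ P hP) M)

/-!
In a unique factorization domain the primes of height at most `1` are `0` and the `(p)` with `p`
prime, so `m` lies in `T₂(M)` exactly when the annihilator of `m` has no common divisor other than
units. Write `(g₁, …, gₙ) = θ • J` with `J = (g₁/θ, …, gₙ/θ)`, an ideal without nonunit common
divisors. The annihilator of the class of `θ * y` contains `J`, so this class is in `T₂`.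
Conversely, if `K` has no nonunit common divisor and `K * x ⊆ θ • J ⊆ (θ)`, then `θ` divides `x`:
cancelling a greatest common divisor of `θ` and `x` leaves a divisor of `θ` that divides all of
`K`, hence is a unit.
-/

open scoped Pointwise nonZeroDivisors

section

variable {R : Type*} [CommRing R]

/-- An ideal is primitive if the only common divisors of its elements are the units, that is, if it
lies in no proper principal ideal. This is the ideal version of `Polynomial.IsPrimitive`, and is
unrelated to the primitive ideals (annihilators of simple modules) of noncommutative algebra. -/
def IsPrimitiveIdeal (J : Ideal R) : Prop :=
  ∀ d : R, J ≤ Ideal.span {d} → IsUnit d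

namespace IsPrimitiveIdeal

theorem mono {J K : Ideal R} (hJ : IsPrimitiveIdeal J) (hJK : J ≤ K) : IsPrimitiveIdeal K :=
  fun d hd => hJ d (hJK.trans hd)

theorem dvd_of_forall_dvd_mul [UniqueFactorizationMonoid R] {K : Ideal R}
    (hK : IsPrimitiveIdeal K) {a x : R} (h : ∀ s ∈ K, a ∣ s * x) : a ∣ x := by
  rcases eq_or_ne x 0 with rfl | hx
  · exact dvd_zero a
  obtain ⟨a', x', c, hrel, rfl, rfl⟩ := UniqueFactorizationMonoid.exists_reduced_factors' a x hx
  have hc : c ≠ 0 := left_ne_zero_of_mul hx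
  have ha' : IsUnit a' := hK a' fun s hs => by
    have hdvd : c * a' ∣ c * (s * x') := mul_left_comm s c x' ▸ h s hs
    exact Ideal.mem_span_singleton.2
      (hrel.dvd_of_dvd_mul_right ((mul_dvd_mul_iff_left hc).1 hdvd))
  exact mul_dvd_mul_left c ha'.dvd

end IsPrimitiveIdeal

theorem isPrimitiveIdeal_span_range_of_gcd [IsCancelMulZero R] {ι : Type*} {g g' : ι → R} {θ : R}
    (hθ : θ ≠ 0) (hdvd : ∀ i, g i = θ * g' i) (hgcd : ∀ d : R, (∀ i, d ∣ g i) → d ∣ θ) :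
    IsPrimitiveIdeal (Ideal.span (Set.range g')) := by
  intro d hd
  have hdg' (i : ι) : d ∣ g' i :=
    Ideal.mem_span_singleton.1 (hd (Ideal.subset_span (Set.mem_range_self i)))
  have hθd : θ * d ∣ θ * 1 := by
    rw [mul_one]
    exact hgcd _ fun i => hdvd i ▸ mul_dvd_mul_left θ (hdg' i)
  exact isUnit_of_dvd_one ((mul_dvd_mul_iff_left hθ).1 hθd)

section UniqueFactorization

variable [IsDomain R] [UniqueFactorizationMonoid R]

theorem height_span_singleton_le_one_of_prime {p : R} (hp : Prime p) :
    (Ideal.span {p}).height ≤ 1 := by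
  have : (Ideal.span {p}).IsPrime := (Ideal.span_singleton_prime hp.ne_zero).2 hp
  refine Ideal.height_le_iff.2 fun Q hQ hlt => ?_
  suffices Q = ⊥ by simp [this]
  by_contra hbot
  obtain ⟨q, hqQ, hq⟩ := hQ.exists_mem_prime_of_ne_bot hbot
  have hpq : p ∣ q := Ideal.mem_span_singleton.1 (hlt.le hqQ)
  have hqp : q ∣ p := (hp.associated_of_dvd hq hpq).dvd'
  exact hlt.not_ge
    ((Ideal.span_singleton_le_iff_mem Q).2 (Ideal.mem_of_dvd Q hqp hqQ))

theorem height_le_one_iff_eq_bot_or_eq_span_prime {P : Ideal R} [hP : P.IsPrime] :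
    P.height ≤ 1 ↔ P = ⊥ ∨ ∃ p, Prime p ∧ P = Ideal.span {p} := by
  constructor
  · intro hle
    refine or_iff_not_imp_left.2 fun hbot => ?_
    have hone : P.height = 1 := hle.antisymm
      (Order.one_le_iff_ne_zero.2 (Ideal.height_eq_zero_iff_eq_bot.not.2 hbot))
    obtain ⟨p, hpP, hp⟩ := hP.exists_mem_prime_of_ne_bot hbot
    exact ⟨p, hp, P.eq_span_singleton_of_height_eq_one hone hpP hp⟩
  · rintro (rfl | ⟨p, hp, rfl⟩)
    · simp
    · exact height_span_singleton_le_one_of_prime hp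

theorem isPrimitiveIdeal_iff_forall_not_le_of_height_le_one {J : Ideal R} :
    IsPrimitiveIdeal J ↔ ∀ P : Ideal R, P.IsPrime → P.height ≤ 1 → ¬ J ≤ P := by
  constructor
  · intro hJ P hP hle hJP
    rcases height_le_one_iff_eq_bot_or_eq_span_prime.1 hle with rfl | ⟨p, hp, rfl⟩
    · exact not_isUnit_zero (hJ 0 (by rwa [Ideal.span_singleton_zero]))
    · exact hp.not_isUnit (hJ p hJP)
  · intro h d hJd
    by_contra hd
    rcases eq_or_ne d 0 with rfl | hd0
    · rw [Ideal.span_singleton_zero] at hJd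
      exact h ⊥ Ideal.isPrime_bot (by simp) hJd
    · obtain ⟨p, hp, hpd⟩ := WfDvdMonoid.exists_irreducible_factor hd hd0
      exact h (Ideal.span {p}) ((Ideal.span_singleton_prime hp.ne_zero).2 hp.prime)
        (height_span_singleton_le_one_of_prime hp.prime)
        (hJd.trans (Ideal.span_singleton_le_span_singleton.2 hpd))

end UniqueFactorization

section PseudoNull

variable {M : Type*} [AddCommGroup M] [Module R M]

theorem mem_maxPseudoNullSubmodule_iff_forall_not_torsionOf_le {m : M} :
    m ∈ maxPseudoNullSubmodule R M ↔
      ∀ P : Ideal R, P.IsPrime → P.height ≤ 1 → ¬ Ideal.torsionOf R M m ≤ P := by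
  simp only [maxPseudoNullSubmodule, Submodule.mem_iInf, LocalizedModule.mem_ker_mkLinearMap_iff,
    ← PrimeSpectrum.height_eq_orderHeight, SetLike.not_le_iff_exists, Ideal.mem_torsionOf_iff,
    Ideal.mem_primeCompl_iff, and_comm]

theorem mem_maxPseudoNullSubmodule_iff_isPrimitiveIdeal_torsionOf [IsDomain R]
    [UniqueFactorizationMonoid R] {m : M} :
    m ∈ maxPseudoNullSubmodule R M ↔ IsPrimitiveIdeal (Ideal.torsionOf R M m) := by
  rw [mem_maxPseudoNullSubmodule_iff_forall_not_torsionOf_le,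
    isPrimitiveIdeal_iff_forall_not_le_of_height_le_one]

end PseudoNull

theorem mem_torsionOf_mk_iff {I : Ideal R} {s x : R} :
    s ∈ Ideal.torsionOf R (R ⧸ I) (Submodule.Quotient.mk x) ↔ s * x ∈ I := by
  rw [Ideal.mem_torsionOf_iff, ← Submodule.Quotient.mk_smul, Submodule.Quotient.mk_eq_zero,
    smul_eq_mul]

theorem IsPrimitiveIdeal.maxPseudoNullSubmodule_quotient_smul [IsDomain R]
    [UniqueFactorizationMonoid R] {J : Ideal R} (hJ : IsPrimitiveIdeal J) (a : R) :
    maxPseudoNullSubmodule R (R ⧸ a • J) = Submodule.map (a • J).mkQ (Ideal.span {a}) := by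
  apply le_antisymm
  · intro m hm
    obtain ⟨x, rfl⟩ := Submodule.Quotient.mk_surjective _ m
    have hann := mem_maxPseudoNullSubmodule_iff_isPrimitiveIdeal_torsionOf.1 hm
    have hax : a ∣ x := hann.dvd_of_forall_dvd_mul fun s hs => by
      obtain ⟨y, -, hy⟩ := mem_torsionOf_mk_iff.1 hs
      exact ⟨y, hy.symm⟩
    exact Submodule.mem_map_of_mem (Ideal.mem_span_singleton.2 hax)
  · rintro _ ⟨_, hx, rfl⟩
    obtain ⟨y, rfl⟩ := Ideal.mem_span_singleton.1 hx
    refine mem_maxPseudoNullSubmodule_iff_isPrimitiveIdeal_torsionOf.2 (hJ.mono fun s hs => ?_)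
    refine mem_torsionOf_mk_iff.2 ?_
    rw [mul_left_comm]
    exact Submodule.smul_mem_pointwise_smul _ a J (J.mul_mem_right y hs)

theorem range_mulQuot (a : R) (J : Ideal R) :
    LinearMap.range (Ideal.mulQuot a J) = Submodule.map (a • J).mkQ (Ideal.span {a}) := by
  rw [← Ideal.range_mul']
  exact Submodule.range_mapQ _ _ _ _

/-- Multiplication by a nonzerodivisor `a` as an isomorphism from `R ⧸ J` onto the image of `(a)` in
`R ⧸ a • J`. -/
noncomputable def mulQuotEquiv {a : R} (ha : a ∈ R⁰) (J : Ideal R) :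
    (R ⧸ J) ≃ₗ[R] Submodule.map (a • J).mkQ (Ideal.span {a}) :=
  (LinearEquiv.ofInjective _ (Ideal.mulQuot_injective J ha)).trans
    (LinearEquiv.ofEq _ _ (range_mulQuot a J))

theorem coe_mulQuotEquiv_mk {a : R} (ha : a ∈ R⁰) (J : Ideal R) (x : R) :
    (mulQuotEquiv ha J (Submodule.Quotient.mk x) : R ⧸ a • J) = Submodule.Quotient.mk (a * x) :=
  rfl

theorem span_range_eq_smul_span_range {ι : Type*} {g g' : ι → R} {θ : R}
    (hdvd : ∀ i, g i = θ * g' i) :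
    Ideal.span (Set.range g) = θ • Ideal.span (Set.range g') := by
  have hrange : Set.range g = θ • Set.range g' := by
    rw [← Set.range_smul]
    exact congrArg Set.range (funext hdvd)
  rw [hrange]
  exact Submodule.span_smul θ _

theorem statement6_general [IsDomain R] [UniqueFactorizationMonoid R] {ι : Type*}
    {g g' : ι → R} {θ : R} (hθ : θ ≠ 0) (hdvd : ∀ i, g i = θ * g' i)
    (hgcd : ∀ d : R, (∀ i, d ∣ g i) → d ∣ θ) :
    maxPseudoNullSubmodule R (R ⧸ Ideal.span (Set.range g)) =
      Submodule.map (Ideal.span (Set.range g)).mkQ (Ideal.span {θ}) ∧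
    ∃ φ : (R ⧸ Ideal.span (Set.range g')) ≃ₗ[R]
        Submodule.map (Ideal.span (Set.range g)).mkQ (Ideal.span {θ}),
      ∀ x : R, (φ (Submodule.Quotient.mk x) : R ⧸ Ideal.span (Set.range g)) =
        Submodule.Quotient.mk (θ * x) := by
  have hprim := isPrimitiveIdeal_span_range_of_gcd hθ hdvd hgcd
  rw [span_range_eq_smul_span_range hdvd]
  exact ⟨hprim.maxPseudoNullSubmodule_quotient_smul θ,
    mulQuotEquiv (mem_nonZeroDivisors_of_ne_zero hθ) _, coe_mulQuotEquiv_mk _ _⟩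

end

theorem statement6 (R : Type*) [CommRing R] [IsDomain R] [IsNoetherianRing R]
    [UniqueFactorizationMonoid R]
    (n : ℕ) (hn : 1 ≤ n) (g g' : Fin n → R) (θ : R)
    (hg : ∀ i, g i ≠ 0)
    (hdvd : ∀ i, g i = θ * g' i)
    (hgcd : ∀ d : R, (∀ i, d ∣ g i) → d ∣ θ) :
    maxPseudoNullSubmodule R (R ⧸ Ideal.span (Set.range g)) =
      Submodule.map (Ideal.span (Set.range g)).mkQ (Ideal.span {θ}) ∧
    ∃ φ : (R ⧸ Ideal.span (Set.range g')) ≃ₗ[R]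
        Submodule.map (Ideal.span (Set.range g)).mkQ (Ideal.span {θ}),
      ∀ x : R, (φ (Submodule.Quotient.mk x) : R ⧸ Ideal.span (Set.range g)) =
        Submodule.Quotient.mk (θ * x) :=
  statement6_general (left_ne_zero_of_mul (hdvd ⟨0, hn⟩ ▸ hg ⟨0, hn⟩)) hdvd hgcd
end

section
/- Let R be a commutative Noetherian regular integral domain and let M be a finitely generated pseudo-null R-module. Then for every prime ideal P of R of height 2, the localizations M_P and (Ext²_R(M,R))_P have finite length over R_P and length_{R_P}((Ext²_R(M,R))_P) = length_{R_P}(M_P); that is, the second Chern class of Ext²_R(M,R) equals the second Chern class of M. -/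
/-!
Localization at `P` commutes with `Ext²` and turns `M` into a module of finite length over the
regular local ring `A = R_P` of dimension 2, so it suffices to show that `N ↦ Ext^d_A(N, A)`
preserves lengths over a regular local ring `A` of dimension `d`. The maximal ideal of `A` is
generated by a regular sequence of length `d`. Dividing it out one element at a time shows that, for
the residue field `k`, `Ext^i_A(k, A)` vanishes for `i < d` and is `Hom_A(k, k) ≅ k` for `i = d`,
while it vanishes for `i > d` because `k` has projective dimension `d`. Hence `Ext^d_A(-, A)` is
exact on modules of finite length and sends simple modules to modules of length one.
-/

open CategoryTheory

universe u

/-- `Ext^i_R(M, N)` as an `R`-module, via the derived functor `Ext` bifunctor on the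
category of `R`-modules. -/
noncomputable def ExtMod (R : Type u) [CommRing R] (M N : Type u) [AddCommGroup M] [Module R M]
    [AddCommGroup N] [Module R N] (i : ℕ) : ModuleCat.{u} R :=
  ((Ext R (ModuleCat.{u} R) i).obj (Opposite.op (ModuleCat.of R M))).obj (ModuleCat.of R N)

open CategoryTheory.Abelian

/-! ### Long exact sequences and functoriality of `Ext` -/

section

variable (R : Type*) [CommRing R] {C : Type*} [Category C] [Abelian C] [Linear R C] [HasExt.{u} C]
  {S : ShortComplex C} (hS : S.ShortExact) (Y : C)

include hS in
theorem exact_ext_precomp_g_f (n : ℕ) :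
    Function.Exact ((Ext.mk₀ S.g).precompOfLinear R Y (zero_add n))
      ((Ext.mk₀ S.f).precompOfLinear R Y (zero_add n)) :=
  (ShortComplex.ab_exact_iff_function_exact _).1 (Ext.contravariant_sequence_exact₂' hS Y n)

theorem exact_ext_precomp_f_extClass (n : ℕ) :
    Function.Exact ((Ext.mk₀ S.f).precompOfLinear R Y (zero_add n))
      (hS.extClass.precompOfLinear R Y (add_comm 1 n)) :=
  (ShortComplex.ab_exact_iff_function_exact _).1
    (Ext.contravariant_sequence_exact₁' hS Y n (n + 1) (add_comm 1 n))

theorem exact_ext_precomp_extClass_g (n : ℕ) :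
    Function.Exact (hS.extClass.precompOfLinear R Y (add_comm 1 n))
      ((Ext.mk₀ S.g).precompOfLinear R Y (zero_add (n + 1))) :=
  (ShortComplex.ab_exact_iff_function_exact _).1
    (Ext.contravariant_sequence_exact₃' hS Y n (n + 1) (add_comm 1 n))

/-- The isomorphism of `Ext` groups induced by isomorphisms in both variables. -/
noncomputable def extCongr {X X' Y Y' : C} (e : X ≅ X') (e' : Y ≅ Y') (n : ℕ) :
    Ext X Y n ≃ₗ[R] Ext X' Y' n :=
  .ofLinearMap
    ((Ext.mk₀ e'.hom).postcompOfLinear R X' (add_zero n) ∘ₗ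
      (Ext.mk₀ e.inv).precompOfLinear R Y (zero_add n))
    ((Ext.mk₀ e.hom).precompOfLinear R Y (zero_add n) ∘ₗ
      (Ext.mk₀ e'.inv).postcompOfLinear R X' (add_zero n))
    (by ext; simp) (by ext; simp)

end

/-- `Ext⁰` is the module of linear maps. -/
noncomputable def extZeroEquiv {A : Type u} [CommRing A] (X Y : ModuleCat.{u} A) :
    Ext X Y 0 ≃ₗ[A] (X →ₗ[A] Y) :=
  Ext.linearEquiv₀ ≪≫ₗ ModuleCat.homLinearEquiv

/-! ### The two constructions of `Ext` -/

section

variable {C : Type*} [Category C] [Abelian C] [HasExt.{u} C] {X : C}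
  (P : ProjectiveResolution X) (Y : C) (n : ℕ)

theorem eq_zero_of_extMk_eq_zero {f : P.complex.X 0 ⟶ Y} (hf : P.complex.d 1 0 ≫ f = 0)
    (h : P.extMk f 1 rfl hf = 0) : f = 0 := by
  have hX : Limits.IsZero (P.cochainComplex.X 1) :=
    P.cochainComplex.isZero_of_isStrictlyLE 0 1 (by simp)
  rw [ProjectiveResolution.extMk, ← P.extEquivCohomologyClass_symm_zero,
    Equiv.apply_eq_iff_eq, CochainComplex.HomComplex.CohomologyClass.mk_eq_zero_iff,
    CochainComplex.HomComplex.Cocycle.toSingleMk_mem_coboundaries_iff _ _ _ _ _ 1 (by simp)] at h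
  obtain ⟨g, hg⟩ := h
  rw [← cancel_epi (P.cochainComplexXIso 0 0 rfl).hom, Limits.comp_zero]
  exact hg.symm.trans (by rw [hX.eq_of_src g 0, Limits.comp_zero])

variable {Y n} in
-- For `n = 0` the map `P.complex.d n _` is `d 0 0 = 0`, as `prev 0 = 0` by convention.
theorem extMk_eq_zero_iff_exists_prev (f : P.complex.X n ⟶ Y)
    (hf : P.complex.d (n + 1) n ≫ f = 0) :
    P.extMk f (n + 1) rfl hf = 0 ↔
      ∃ g : P.complex.X ((ComplexShape.up ℕ).prev n) ⟶ Y, P.complex.d n _ ≫ g = f := by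
  cases n with
  | zero =>
    constructor
    · exact fun h ↦ ⟨0, by rw [Limits.comp_zero, eq_zero_of_extMk_eq_zero P Y hf h]⟩
    · rintro ⟨g, rfl⟩
      simp
  | succ n =>
    rw [show (ComplexShape.up ℕ).prev (n + 1) = n by simp]
    exact P.extMk_eq_zero_iff f (n + 2) rfl hf n rfl

variable (R : Type*) [CommRing R] [Linear R C]

variable {Y n} in
theorem smul_extMk (r : R) (f : P.complex.X n ⟶ Y) (hf : P.complex.d (n + 1) n ≫ f = 0) :
    r • P.extMk f (n + 1) rfl hf =
      P.extMk (r • f) (n + 1) rfl (by rw [Linear.comp_smul, hf, smul_zero]) := by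
  rw [Ext.smul_eq_comp_mk₀, P.extMk_comp_mk₀]
  simp only [Linear.comp_smul, Category.comp_id]

/-- The class in `Ext X Y n` of an `n`-cocycle of a projective resolution of `X`. -/
noncomputable def extOfCocycle :
    (Linear.leftComp R Y (P.complex.d (n + 1) n)).ker →ₗ[R] Ext X Y n where
  toFun f := P.extMk f.1 (n + 1) rfl f.2
  map_add' _ _ := (P.add_extMk _ _ _ _ _ _).symm
  map_smul' r f := (smul_extMk P R r f.1 f.2).symm

theorem extOfCocycle_surjective : Function.Surjective (extOfCocycle P Y n R) := fun x ↦
  have ⟨f, hf, h⟩ := P.extMk_surjective x (n + 1) rfl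
  ⟨⟨f, hf⟩, h⟩

end

/-- The derived-functor `ExtMod` agrees with the `Ext` groups of the derived category; the latter
have the composition and functoriality used for localization and long exact sequences. -/
noncomputable def extModEquiv {R : Type u} [CommRing R] (M N : Type u) [AddCommGroup M]
    [Module R M] [AddCommGroup N] [Module R N] (n : ℕ) :
    ExtMod R M N n ≃ₗ[R] Ext (ModuleCat.of R M) (ModuleCat.of R N) n := by
  let P := ProjectiveResolution.of (ModuleCat.of R M)
  let K := P.complex.linearYonedaObj R (ModuleCat.of R N)
  let S := K.sc' ((ComplexShape.up ℕ).prev n) n (n + 1)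
  let eHomology : ExtMod R M N n ≅ S.moduleCatLeftHomologyData.H :=
    P.isoExt n (ModuleCat.of R N) ≪≫
    (ShortComplex.homologyMapIso (K.isoSc' _ n (n + 1) rfl (by simp))) ≪≫
      S.moduleCatHomologyIso
  let φ : S.g.hom.ker →ₗ[R] _ := extOfCocycle P (ModuleCat.of R N) n R
  have hk : S.moduleCatToCycles.range = φ.ker := by
    ext f
    refine .trans ?_ (extMk_eq_zero_iff_exists_prev P _ f.2).symm
    exact exists_congr fun g ↦ Subtype.ext_iff
  exact eHomology.toLinearEquiv ≪≫ₗ Submodule.quotEquivOfEq _ _ hk ≪≫ₗ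
    φ.quotKerEquivOfSurjective (extOfCocycle_surjective P _ n R)

/-! ### Localization of `Ext` -/

section

variable {R : Type*} [CommRing R]
  {X Y Z X' Y' Z' : Type*} [AddCommGroup X] [AddCommGroup Y] [AddCommGroup Z]
  [AddCommGroup X'] [AddCommGroup Y'] [AddCommGroup Z'] [Module R X] [Module R Y] [Module R Z]
  [Module R X'] [Module R Y'] [Module R Z']
  {f : X →ₗ[R] Y} {g : Y →ₗ[R] Z} {f' : X' →ₗ[R] Y'} {g' : Y' →ₗ[R] Z'}

theorem bijective_smul_of_exact_of_surjective (hfg : Function.Exact f g)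
    (hg : Function.Surjective g) {r : R} (hX : Function.Surjective (r • · : X → X))
    (hY : Function.Bijective (r • · : Y → Y)) : Function.Bijective (r • · : Z → Z) := by
  constructor
  · refine (injective_iff_map_eq_zero (DistribSMul.toAddMonoidHom Z r)).2 fun z hz ↦ ?_
    obtain ⟨y, rfl⟩ := hg z
    obtain ⟨x, hx⟩ := (hfg (r • y)).1 ((map_smul g r y).trans hz)
    obtain ⟨x, rfl⟩ := hX x
    rw [← hY.injective ((map_smul f r x).symm.trans hx), hfg.apply_apply_eq_zero]
  · intro z
    obtain ⟨y, rfl⟩ := hg z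
    obtain ⟨y, rfl⟩ := hY.surjective y
    exact ⟨g y, (map_smul g r y).symm⟩

theorem isLocalizedModule_of_exact_of_surjective (S : Submonoid R)
    (hfg : Function.Exact f g) (hg : Function.Surjective g)
    (hfg' : Function.Exact f' g') (hg' : Function.Surjective g')
    {a : X →ₗ[R] X'} {b : Y →ₗ[R] Y'} {c : Z →ₗ[R] Z'}
    (hab : ∀ x, b (f x) = f' (a x)) (hbc : ∀ y, c (g y) = g' (b y))
    (ha : IsLocalizedModule S a) (hb : IsLocalizedModule S b) : IsLocalizedModule S c where
  map_units s :=
    (Module.End.isUnit_iff _).2 <| bijective_smul_of_exact_of_surjective hfg' hg'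
      ((Module.End.isUnit_iff _).1 (ha.map_units s)).surjective
      ((Module.End.isUnit_iff _).1 (hb.map_units s))
  surj z := by
    obtain ⟨y, rfl⟩ := hg' z
    obtain ⟨⟨y₀, s⟩, hs⟩ := IsLocalizedModule.surj S b y
    exact ⟨(g y₀, s), by rw [hbc, ← hs]; simp [Submonoid.smul_def]⟩
  exists_of_eq {z₁ z₂} hz := by
    obtain ⟨y₁, rfl⟩ := hg z₁
    obtain ⟨y₂, rfl⟩ := hg z₂
    have hy : g' (b (y₁ - y₂)) = 0 := by rw [← hbc, map_sub, map_sub, hz, sub_self]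
    obtain ⟨x', hx'⟩ := (hfg' _).1 hy
    obtain ⟨⟨x, s⟩, hs⟩ := IsLocalizedModule.surj S a x'
    have hb : b (f x) = b (s • (y₁ - y₂)) := by
      rw [hab, ← hs, Submonoid.smul_def, Submonoid.smul_def, map_smul, hx', map_smul]
    obtain ⟨t, ht⟩ := IsLocalizedModule.exists_of_eq (S := S) hb
    refine ⟨t * s, sub_eq_zero.1 ?_⟩
    rw [← smul_sub, ← map_sub, mul_smul]
    have := congrArg g ht
    simpa [Submonoid.smul_def, hfg.apply_apply_eq_zero, ← smul_sub] using this.symm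

end

/-- The `R`-linear structure on an `A`-linear category obtained by restriction of scalars. It is
not an instance, since it could compete with a given `R`-linear structure. -/
@[reducible] def linearOfAlgebra (R : Type*) [CommRing R] (A : Type*) [CommRing A] [Algebra R A]
    (C : Type*) [Category C] [Preadditive C] [Linear A C] : Linear R C where
  homModule _ _ := Module.compHom _ (algebraMap R A)
  smul_comp _ _ _ r f g := Linear.smul_comp _ _ _ (algebraMap R A r) f g
  comp_smul _ _ _ f r g := Linear.comp_smul _ _ _ f (algebraMap R A r) g

section

variable {R : Type u} [CommRing R] (S : Submonoid R)

noncomputable local instance : Linear R (ModuleCat.{u} (Localization S)) :=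
  linearOfAlgebra R (Localization S) _

noncomputable instance : (ModuleCat.localizedModuleFunctor.{u} S).Linear R where
  map_smul {M N} f r := by
    ext x
    have := congrArg (· x) ((IsLocalizedModule.map S (M.localizedModuleMkLinearMap S)
      (N.localizedModuleMkLinearMap S)).map_smul r f.hom)
    exact this.trans (algebraMap_smul (Localization S) r _).symm

/-- The map `Ext R M N n → Ext (S⁻¹R) (S⁻¹M) (S⁻¹N) n` induced by the exact functor `S⁻¹`. -/
noncomputable def extLoc (M N : ModuleCat.{u} R) (n : ℕ) :
    Ext M N n →ₗ[R] Ext (M.localizedModule S) (N.localizedModule S) n :=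
  (ModuleCat.localizedModuleFunctor.{u} S).mapExtLinearMap R M N n

instance (X Y : ModuleCat.{u} (Localization S)) (n : ℕ) :
    IsScalarTower R (Localization S) (Ext X Y n) := by
  refine .of_algebraMap_smul fun r x ↦ ?_
  rw [Ext.smul_eq_comp_mk₀, Ext.smul_eq_comp_mk₀]
  rfl

theorem isLocalizedModule_extLoc_zero (M N : ModuleCat.{u} R)
    [Module.FinitePresentation R M] : IsLocalizedModule S (extLoc S M N 0) := by
  let e := extZeroEquiv M N
  let e' := (extZeroEquiv (M.localizedModule S) (N.localizedModule S)).restrictScalars R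
  have comm : extLoc S M N 0 = e'.symm.toLinearMap ∘ₗ IsLocalizedModule.mapExtendScalars S
      (M.localizedModuleMkLinearMap S) (N.localizedModuleMkLinearMap S) (Localization S) ∘ₗ
      e.toLinearMap := by
    refine LinearMap.ext fun x ↦ ?_
    obtain ⟨f, rfl⟩ := e.symm.surjective x
    refine (Ext.mapExactFunctor_mk₀ _ (ModuleCat.ofHom f)).trans (congrArg
      (fun h ↦ e'.symm (IsLocalizedModule.mapExtendScalars S (M.localizedModuleMkLinearMap S)
        (N.localizedModuleMkLinearMap S) (Localization S) h)) (e.apply_symm_apply f).symm)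
  rw [comm]
  infer_instance

theorem isLocalizedModule_extLoc [IsNoetherianRing R] (M N : ModuleCat.{u} R)
    [Module.Finite R M] (n : ℕ) : IsLocalizedModule S (extLoc S M N n) := by
  induction n generalizing M with
  | zero =>
    have := Module.finitePresentation_of_finite R M
    exact isLocalizedModule_extLoc_zero S M N
  | succ n ih =>
    obtain ⟨F, _, _, _, _, f, hf⟩ := Module.exists_finite_presentation R M
    let L := ModuleCat.localizedModuleFunctor.{u} S
    let T := f.shortComplexKer
    have hT : T.ShortExact := LinearMap.shortExact_shortComplexKer hf
    have hLT : (T.map L).ShortExact := hT.map_of_exact L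
    have : Module.Finite R T.X₁ := inferInstanceAs (Module.Finite R f.ker)
    have : Module.Finite R T.X₂ := inferInstanceAs (Module.Finite R F)
    have : Projective T.X₂ := inferInstanceAs (Projective (ModuleCat.of R F))
    have : Projective (T.map L).X₂ := L.projective_obj _
    refine isLocalizedModule_of_exact_of_surjective S
      (exact_ext_precomp_f_extClass R hT N n) (precomp_extClass_surjective_of_projective_X₂ N hT n)
      (exact_ext_precomp_f_extClass R hLT (L.obj N) n)
      (precomp_extClass_surjective_of_projective_X₂ (L.obj N) hLT n)
      (fun x ↦ (Ext.mapExactFunctor_comp L _ x (zero_add n)).trans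
        (by rw [Ext.mapExactFunctor_mk₀]; rfl))
      (fun x ↦ (Ext.mapExactFunctor_comp L _ x (add_comm 1 n)).trans
        (by rw [Ext.mapExactFunctor_extClass]; rfl))
      (ih T.X₂) (ih T.X₁)

/-- `ModuleCat.localizedModule` compared with any other localization of the module. -/
noncomputable def localizedModuleEquiv (M : ModuleCat.{u} R) {M' : Type u} [AddCommGroup M']
    [Module R M'] [Module (Localization S) M'] [IsScalarTower R (Localization S) M']
    (f : M →ₗ[R] M') [IsLocalizedModule S f] : M.localizedModule S ≃ₗ[Localization S] M' :=
  (IsLocalizedModule.linearEquiv S (M.localizedModuleMkLinearMap S)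
    f).extendScalarsOfIsLocalization S _

/-- The localization of `Ext` over `R` is `Ext` over `S⁻¹R`, for arbitrary localization maps
`f : M → M'` and `g : N → N'`. -/
noncomputable def localizedExtModEquiv [IsNoetherianRing R] {M N M' N' : Type u} [AddCommGroup M]
    [AddCommGroup N] [AddCommGroup M'] [AddCommGroup N'] [Module R M] [Module R N] [Module R M']
    [Module R N'] [Module (Localization S) M'] [Module (Localization S) N']
    [IsScalarTower R (Localization S) M'] [IsScalarTower R (Localization S) N']
    [Module.Finite R M] (f : M →ₗ[R] M') [IsLocalizedModule S f] (g : N →ₗ[R] N')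
    [IsLocalizedModule S g] (n : ℕ) :
    LocalizedModule S (ExtMod R M N n) ≃ₗ[Localization S]
      Ext (ModuleCat.of (Localization S) M') (ModuleCat.of (Localization S) N') n :=
  let φ := extLoc S (ModuleCat.of R M) (ModuleCat.of R N) n
  have : IsLocalizedModule S φ := isLocalizedModule_extLoc S _ _ n
  (IsLocalizedModule.iso S (φ ∘ₗ (extModEquiv M N n).toLinearMap)).extendScalarsOfIsLocalization
      S _ ≪≫ₗ
    extCongr (Localization S) (localizedModuleEquiv S (ModuleCat.of R M) f).toModuleIso
      (localizedModuleEquiv S (ModuleCat.of R N) g).toModuleIso n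

end

/-! ### `Ext` into a module with a regular sequence -/

section

open RingTheory.Sequence
variable {A : Type u} [CommRing A] {N M : ModuleCat.{u} A} {x : A}

theorem ext_comp_smul_id_eq_zero (hx : x ∈ Module.annihilator A N) {n : ℕ} (e : Ext N M n) :
    e.comp (Ext.mk₀ (x • 𝟙 M)) (add_zero n) = 0 :=
  DFunLike.congr_fun (congrArg AddCommGrpCat.Hom.hom
    (Ext.postcomp_smul_id_eq_zero_of_mem_annihilator hx n)) e

theorem bijective_ext_postcomp_extClass_of_mem_annihilator (hx : x ∈ Module.annihilator A N)
    (hxM : IsSMulRegular M x) (n : ℕ) [Subsingleton (Ext N M n)] :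
    Function.Bijective (hxM.smulShortComplex_shortExact.extClass.postcompOfLinear A N
      (rfl : n + 1 = n + 1)) := by
  constructor
  · refine (injective_iff_map_eq_zero _).2 fun e he ↦ ?_
    obtain ⟨e', rfl⟩ :=
      Ext.covariant_sequence_exact₃ N hxM.smulShortComplex_shortExact e rfl he
    exact (congrArg (Ext.comp · _ _) (Subsingleton.elim (α := Ext N M n) e' 0)).trans
      (Ext.zero_comp ..)
  · exact fun e ↦ Ext.covariant_sequence_exact₁ N hxM.smulShortComplex_shortExact e
      (ext_comp_smul_id_eq_zero hx e) rfl

theorem subsingleton_ext_of_isWeaklyRegular {rs : List A} (hrs : IsWeaklyRegular M rs)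
    (hN : ∀ r ∈ rs, r ∈ Module.annihilator A N) {n : ℕ} (hn : n < rs.length) :
    Subsingleton (Ext N M n) := by
  induction n generalizing M rs with
  | zero =>
    obtain ⟨x, rs, rfl⟩ := List.exists_cons_of_length_pos hn
    have := IsSMulRegular.linearMap_subsingleton_of_mem_annihilator
      ((isWeaklyRegular_cons_iff _ _ _).1 hrs).1 (hN x List.mem_cons_self)
    exact (Ext.addEquiv₀.trans ModuleCat.homAddEquiv).subsingleton
  | succ n ih =>
    obtain ⟨x, rs, rfl⟩ := List.exists_cons_of_length_pos (Nat.zero_lt_of_lt hn)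
    obtain ⟨hx, hrs'⟩ := (isWeaklyRegular_cons_iff _ _ _).1 hrs
    have := ih hrs hN (Nat.lt_of_succ_lt hn)
    have : Subsingleton (Ext N (M.smulShortComplex x).X₃ n) := ih (M := .of A (QuotSMulTop x M))
      hrs' (fun r hr ↦ hN r (List.mem_cons_of_mem x hr)) (Nat.lt_of_succ_lt_succ hn)
    exact (bijective_ext_postcomp_extClass_of_mem_annihilator
      (hN x List.mem_cons_self) hx n).surjective.subsingleton

theorem nonempty_ext_length_linearEquiv {rs : List A} (hrs : IsWeaklyRegular M rs)
    (hN : ∀ r ∈ rs, r ∈ Module.annihilator A N) :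
    Nonempty (Ext N M rs.length ≃ₗ[A] (N →ₗ[A] M ⧸ (Ideal.ofList rs • ⊤ : Submodule A M))) := by
  induction rs generalizing M with
  | nil =>
    exact ⟨extZeroEquiv N M ≪≫ₗ .congrRight (Submodule.quotEquivOfEqBot _ (by simp)).symm⟩
  | cons x rs ih =>
    obtain ⟨hx, hrs'⟩ := (isWeaklyRegular_cons_iff _ _ _).1 hrs
    have := subsingleton_ext_of_isWeaklyRegular hrs hN (Nat.lt_succ_self rs.length)
    obtain ⟨e⟩ := ih (M := .of A (QuotSMulTop x M)) hrs'
      fun r hr ↦ hN r (List.mem_cons_of_mem x hr)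
    exact ⟨(LinearEquiv.ofBijective _ (bijective_ext_postcomp_extClass_of_mem_annihilator
      (hN x List.mem_cons_self) hx rs.length)).symm ≪≫ₗ e ≪≫ₗ
      .congrRight (Submodule.quotOfListConsSMulTopEquivQuotSMulTopInner M x rs).symm⟩

end

/-! ### Duality for modules of finite length -/

section

variable {A : Type u} [CommRing A]

theorem shortExact_subtype_mkQ {M : Type u} [AddCommGroup M] [Module A M] (N : Submodule A M) :
    (ModuleCat.shortComplexOfCompEqZero N.subtype N.mkQ
      (LinearMap.exact_subtype_mkQ N).linearMap_comp_eq_zero).ShortExact :=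
  ModuleCat.shortComplex_shortExact _ (LinearMap.exact_subtype_mkQ N)
    N.subtype_injective N.mkQ_surjective

theorem subsingleton_ext_of_subsingleton (N X : ModuleCat.{u} A) [Subsingleton N] (n : ℕ) :
    Subsingleton (Ext N X n) :=
  have := (ModuleCat.isZero_of_subsingleton N).hasProjectiveDimensionLT_zero
  HasProjectiveDimensionLT.subsingleton N 0 n n.zero_le X

variable {X : ModuleCat.{u} A}

theorem subsingleton_ext_of_isFiniteLength {n : ℕ}
    (hX : ∀ (S : ModuleCat.{u} A) [IsSimpleModule A S], Subsingleton (Ext S X n))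
    {N : Type u} [AddCommGroup N] [Module A N] (hN : IsFiniteLength A N) :
    Subsingleton (Ext (ModuleCat.of A N) X n) := by
  induction hN with
  | @of_subsingleton N =>
    exact subsingleton_ext_of_subsingleton _ _ _
  | @of_simple_quotient M _ _ N _ _ ih =>
    have := hX (.of A (M ⧸ N))
    refine subsingleton_of_forall_eq 0 fun e ↦ ?_
    obtain ⟨e', rfl⟩ := (exact_ext_precomp_g_f A (shortExact_subtype_mkQ N) X n e).1
      (Subsingleton.elim (α := Ext (.of A N) X n) _ _)
    rw [show e' = 0 from Subsingleton.elim (α := Ext (.of A (M ⧸ N)) X n) _ _, map_zero]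

theorem length_ext_of_shortExact {T : ShortComplex (ModuleCat.{u} A)} (hT : T.ShortExact) {d : ℕ}
    (h₁ : ∀ i < d, Subsingleton (Ext T.X₁ X i)) [Subsingleton (Ext T.X₃ X (d + 1))] :
    Module.length A (Ext T.X₂ X d) =
      Module.length A (Ext T.X₃ X d) + Module.length A (Ext T.X₁ X d) := by
  refine Module.length_eq_add_of_exact _ _ ?_ ?_ (exact_ext_precomp_g_f A hT X d)
  · cases d with
    | zero =>
      have := hT.epi_g
      exact Ext.precomp_mk₀_injective_of_epi X T.g
    | succ d =>
      have := h₁ d d.lt_succ_self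
      refine (injective_iff_map_eq_zero _).2 fun e he ↦ ?_
      obtain ⟨e', rfl⟩ := (exact_ext_precomp_extClass_g A hT X d e).1 he
      rw [Subsingleton.elim e' 0, map_zero]
  · exact fun e ↦ (exact_ext_precomp_f_extClass A hT X d e).1 (Subsingleton.elim _ _)

theorem length_ext_eq_length_of_isFiniteLength {d : ℕ}
    (hlt : ∀ i < d, ∀ (S : ModuleCat.{u} A) [IsSimpleModule A S], Subsingleton (Ext S X i))
    (hsucc : ∀ (S : ModuleCat.{u} A) [IsSimpleModule A S], Subsingleton (Ext S X (d + 1)))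
    (hd : ∀ (S : ModuleCat.{u} A) [IsSimpleModule A S], Module.length A (Ext S X d) = 1)
    {N : Type u} [AddCommGroup N] [Module A N] (hN : IsFiniteLength A N) :
    Module.length A (Ext (ModuleCat.of A N) X d) = Module.length A N := by
  induction hN with
  | @of_subsingleton N =>
    have := subsingleton_ext_of_subsingleton (.of A N) X d
    rw [Module.length_eq_zero, Module.length_eq_zero]
  | @of_simple_quotient M _ _ N _ hN ih =>
    have := hsucc (.of A (M ⧸ N))
    have h := length_ext_of_shortExact (shortExact_subtype_mkQ N) (X := X) (d := d)
      fun i hi ↦ subsingleton_ext_of_isFiniteLength (hlt i hi) hN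
    calc
      Module.length A (Ext (ModuleCat.of A M) X d)
        = Module.length A (Ext (ModuleCat.of A (M ⧸ N)) X d) +
            Module.length A (Ext (ModuleCat.of A N) X d) := h
      _ = Module.length A (M ⧸ N) + Module.length A N := by
        rw [ih, hd (.of A (M ⧸ N)), Module.length_eq_one A (M ⧸ N)]
      _ = Module.length A M := by
        rw [add_comm, Module.length_eq_add_of_exact N.subtype N.mkQ N.subtype_injective
          N.mkQ_surjective (LinearMap.exact_subtype_mkQ N)]

end

section

open RingTheory.Sequence IsLocalRing
variable {A : Type u} [CommRing A]

/-- The endomorphism ring of the cyclic module `A ⧸ I`, as an `A`-module. -/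
noncomputable def quotientEndEquiv (I : Ideal A) : ((A ⧸ I) →ₗ[A] (A ⧸ I)) ≃ₗ[A] A ⧸ I :=
  LinearMap.extendScalarsOfSurjectiveEquiv (Ideal.Quotient.mk_surjective (I := I)) ≪≫ₗ
    LinearMap.ringLmapEquivSelf (A ⧸ I) A (A ⧸ I)

variable [IsLocalRing A]

theorem nonempty_linearEquiv_quotient_maximalIdeal (S : Type*) [AddCommGroup S] [Module A S]
    [IsSimpleModule A S] : Nonempty (S ≃ₗ[A] A ⧸ maximalIdeal A) := by
  obtain ⟨I, hI, h⟩ := isSimpleModule_iff_quot_maximal.1 ‹IsSimpleModule A S›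
  rwa [← eq_maximalIdeal hI]

theorem annihilator_eq_maximalIdeal (S : Type*) [AddCommGroup S] [Module A S]
    [IsSimpleModule A S] : Module.annihilator A S = maximalIdeal A :=
  eq_maximalIdeal IsSimpleModule.annihilator_isMaximal

variable {rs : List A} (hrs : IsWeaklyRegular A rs) (hm : Ideal.ofList rs = maximalIdeal A)
  (S : ModuleCat.{u} A) [IsSimpleModule A S]

include hm in
theorem mem_annihilator_of_ofList_eq_maximalIdeal : ∀ r ∈ rs, r ∈ Module.annihilator A S := by
  rw [annihilator_eq_maximalIdeal, ← hm]
  exact fun r hr ↦ Ideal.subset_span hr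

include hrs hm in
theorem length_ext_length_eq_one : Module.length A (Ext S (.of A A) rs.length) = 1 := by
  obtain ⟨e⟩ := nonempty_ext_length_linearEquiv (M := ModuleCat.of A A) hrs
    (mem_annihilator_of_ofList_eq_maximalIdeal hm S)
  obtain ⟨eS⟩ := nonempty_linearEquiv_quotient_maximalIdeal (A := A) S
  have hI : (Ideal.ofList rs • ⊤ : Submodule A A) = maximalIdeal A := by
    rw [hm, Ideal.smul_eq_mul, Ideal.mul_top]
  have eHom := eS.arrowCongr (Submodule.quotEquivOfEq _ _ hI) ≪≫ₗ
    quotientEndEquiv (maximalIdeal A)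
  have : IsSimpleModule A (A ⧸ maximalIdeal A) := .congr eS.symm
  rw [(e ≪≫ₗ eHom).length_eq, Module.length_eq_one]

include hrs hm in
theorem hasProjectiveDimensionLE_length [IsNoetherianRing A] :
    HasProjectiveDimensionLE S rs.length := by
  obtain ⟨eS⟩ := nonempty_linearEquiv_quotient_maximalIdeal (A := A) S
  have hI : maximalIdeal A = (Ideal.ofList rs • ⊤ : Submodule A A) := by
    rw [hm, Ideal.smul_eq_mul, Ideal.mul_top]
  rw [← projectiveDimension_le_iff,
    projectiveDimension_eq_of_iso (eS ≪≫ₗ Submodule.quotEquivOfEq _ _ hI).toModuleIso,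
    ModuleCat.projectiveDimension_quotient_eq_add_length_of_isWeaklyRegular (.of A A) rs hrs
      fun r hr ↦ hm ▸ Ideal.subset_span hr,
    ModuleCat.projectiveDimension_eq_zero_of_projective, zero_add]

include hrs hm in
theorem length_ext_length_eq_length [IsNoetherianRing A]
    {N : Type u} [AddCommGroup N] [Module A N] (hN : IsFiniteLength A N) :
    Module.length A (Ext (ModuleCat.of A N) (ModuleCat.of A A) rs.length) = Module.length A N :=
  length_ext_eq_length_of_isFiniteLength
    (fun _ hi S _ ↦ subsingleton_ext_of_isWeaklyRegular (M := .of A A) hrs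
      (mem_annihilator_of_ofList_eq_maximalIdeal hm S) hi)
    (fun S _ ↦ have := hasProjectiveDimensionLE_length hrs hm S
      HasProjectiveDimensionLT.subsingleton S _ _ le_rfl _)
    (fun S _ ↦ length_ext_length_eq_one hrs hm S) hN

end

/-! ### Regular local rings -/

section

open IsLocalRing RingTheory.Sequence
open scoped Pointwise

variable {A : Type*} [CommRing A]

theorem exists_mem_maximalIdeal_notMem_sq_notMem_minimalPrimes [IsLocalRing A]
    [IsNoetherianRing A] (hA : ringKrullDim A ≠ 0) :
    ∃ x ∈ maximalIdeal A, x ∉ maximalIdeal A ^ 2 ∧ ∀ q ∈ minimalPrimes A, x ∉ q := by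
  by_contra! h
  have hcover : (maximalIdeal A : Set A) ⊆
      ⋃ I ∈ insert (maximalIdeal A ^ 2) (minimalPrimes A), (I : Set A) := fun x hx ↦ by
    by_cases hx2 : x ∈ maximalIdeal A ^ 2
    · exact Set.mem_biUnion (Set.mem_insert _ _) hx2
    · obtain ⟨q, hq, hxq⟩ := h x hx hx2
      exact Set.mem_biUnion (Set.mem_insert_of_mem _ hq) hxq
  obtain ⟨I, rfl | hI, hle⟩ := (Ideal.subset_union_prime_finite (f := id)
    ((minimalPrimes.finite_of_isNoetherianRing A).insert _) (maximalIdeal A ^ 2)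
    (maximalIdeal A ^ 2) fun q hq hne _ ↦ (hq.resolve_left hne).1.1).1 hcover
  · have hbot : maximalIdeal A = ⊥ := Submodule.eq_bot_of_le_smul_of_le_jacobson_bot _ _
      (IsNoetherian.noetherian _) (by rwa [smul_eq_mul, ← sq]) (maximalIdeal_le_jacobson ⊥)
    exact hA (ringKrullDim_eq_zero_of_isField (isField_iff_maximalIdeal_eq.2 hbot))
  · have := hI.1.1
    have hmax : maximalIdeal A ∈ minimalPrimes A :=
      (le_antisymm hle (le_maximalIdeal_of_isPrime I)) ▸ hI
    rw [← maximalIdeal_height_eq_ringKrullDim, Ideal.height_eq_zero_iff.2 hmax] at hA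
    exact hA rfl

theorem map_mk_maximalIdeal [IsLocalRing A] (I : Ideal A) [IsLocalRing (A ⧸ I)] :
    (maximalIdeal A).map (Ideal.Quotient.mk I) = maximalIdeal (A ⧸ I) := by
  have := IsLocalHom.of_surjective (Ideal.Quotient.mk I) Ideal.Quotient.mk_surjective
  rw [← maximalIdeal_comap (Ideal.Quotient.mk I),
    Ideal.map_comap_of_surjective _ Ideal.Quotient.mk_surjective]

variable {x : A}

theorem spanFinrank_map_mk_span_singleton_lt [IsLocalRing A] {I : Ideal A} (hI : I.FG)
    (hx : x ∈ I) (hx' : x ∉ maximalIdeal A * I) :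
    (I.map (Ideal.Quotient.mk (Ideal.span {x}))).spanFinrank < I.spanFinrank := by
  classical
  obtain ⟨s, hcard, rfl⟩ := Submodule.FG.exists_span_finset_card_eq_spanFinrank hI
  obtain ⟨c, -, hc⟩ := Submodule.mem_span_finset.1 hx
  obtain ⟨y, hy, hcy⟩ : ∃ y ∈ s, IsUnit (c y) := by
    by_contra! hmem
    exact hx' (hc ▸ sum_mem fun y hy ↦ Ideal.mul_mem_mul (hmem y hy) (Ideal.subset_span hy))
  set π := Ideal.Quotient.mk (Ideal.span {x})
  have hsum : π (c y) * π y + ∑ z ∈ s.erase y, π (c z) * π z = 0 := by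
    rw [Finset.add_sum_erase s (fun z ↦ π (c z) * π z) hy]
    simp_rw [← map_mul, ← map_sum]
    exact Ideal.Quotient.eq_zero_iff_mem.2 (hc ▸ Ideal.mem_span_singleton_self x)
  have hπy : π y ∈ Ideal.span (π '' (s.erase y)) := by
    rw [← Ideal.unit_mul_mem_iff_mem _ (hcy.map π), eq_neg_of_add_eq_zero_left hsum]
    exact neg_mem (sum_mem fun z hz ↦
      Ideal.mul_mem_left _ _ (Ideal.subset_span (Set.mem_image_of_mem π hz)))
  have hspan : (Ideal.span (s : Set A)).map π = Ideal.span (π '' (s.erase y)) := by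
    rw [Ideal.map_span, ← Finset.insert_erase hy, Finset.coe_insert, Set.image_insert_eq,
      Finset.erase_insert_eq_erase, Finset.erase_idem]
    exact Submodule.span_insert_eq_span hπy
  calc
    _ ≤ (π '' (s.erase y)).ncard := by
      rw [Ideal.submodule_span_eq, hspan]
      exact Submodule.spanFinrank_span_le_ncard_of_finite (Set.toFinite _)
    _ ≤ (s.erase y).card := by
      rw [← Set.ncard_coe_finset]
      exact Set.ncard_image_le (Set.toFinite _)
    _ < s.card := Finset.card_erase_lt_of_mem hy
    _ = _ := hcard

section

theorem isLocalRing_quotient_span_singleton [IsLocalRing A] (hx : x ∈ maximalIdeal A) :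
    IsLocalRing (A ⧸ Ideal.span {x}) :=
  have := Ideal.Quotient.nontrivial_iff.2 (Ideal.span_singleton_ne_top hx)
  .of_surjective' (Ideal.Quotient.mk _) Ideal.Quotient.mk_surjective

theorem ringKrullDim_le_ringKrullDim_quotient_span_singleton_add_one [IsLocalRing A]
    [IsNoetherianRing A] (hx : x ∈ maximalIdeal A) :
    ringKrullDim A ≤ ringKrullDim (A ⧸ Ideal.span {x}) + 1 := by
  simpa [maximalIdeal_height_eq_ringKrullDim] using
    Ideal.height_le_ringKrullDim_quotient_add_encard {x} (Set.singleton_subset_iff.2 hx)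

variable [IsRegularLocalRing A] (hx : x ∈ maximalIdeal A) (hx2 : x ∉ maximalIdeal A ^ 2)
include hx hx2

theorem spanFinrank_maximalIdeal_quotient_span_singleton_add_one_le
    [IsLocalRing (A ⧸ Ideal.span {x})] :
    (maximalIdeal (A ⧸ Ideal.span {x})).spanFinrank + 1 ≤ ringKrullDim A := by
  have hlt := spanFinrank_map_mk_span_singleton_lt (IsNoetherian.noetherian _) hx (by rwa [← sq])
  rw [map_mk_maximalIdeal] at hlt
  rw [← IsRegularLocalRing.spanFinrank_maximalIdeal]
  exact_mod_cast hlt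

theorem isRegularLocalRing_quotient_span_singleton : IsRegularLocalRing (A ⧸ Ideal.span {x}) := by
  have := isLocalRing_quotient_span_singleton hx
  refine .of_spanFinrank_maximalIdeal_le _ (ENat.WithBot.add_le_add_one_right_iff.1 ?_)
  exact (spanFinrank_maximalIdeal_quotient_span_singleton_add_one_le hx hx2).trans
    (ringKrullDim_le_ringKrullDim_quotient_span_singleton_add_one hx)

theorem ringKrullDim_quotient_span_singleton_add_one :
    ringKrullDim (A ⧸ Ideal.span {x}) + 1 = ringKrullDim A := by
  have := isRegularLocalRing_quotient_span_singleton hx hx2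
  refine (ringKrullDim_le_ringKrullDim_quotient_span_singleton_add_one hx).antisymm' ?_
  rw [← IsRegularLocalRing.spanFinrank_maximalIdeal (R := A ⧸ Ideal.span {x})]
  exact spanFinrank_maximalIdeal_quotient_span_singleton_add_one_le hx hx2

end

theorem isField_of_ringKrullDim_eq_zero [IsRegularLocalRing A] (hA : ringKrullDim A = 0) :
    IsField A := by
  rw [isField_iff_maximalIdeal_eq,
    ← Submodule.spanFinrank_eq_zero_iff_eq_bot (IsNoetherian.noetherian _)]
  exact_mod_cast IsRegularLocalRing.spanFinrank_maximalIdeal.trans hA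

theorem isDomain_of_isPrime_span_singleton [IsLocalRing A] [IsNoetherianRing A]
    (hx : x ∈ maximalIdeal A) (hx' : ∀ q ∈ minimalPrimes A, x ∉ q)
    [(Ideal.span {x}).IsPrime] : IsDomain A := by
  obtain ⟨q, hq, hqx⟩ := Ideal.exists_minimalPrimes_le (bot_le (a := Ideal.span {x}))
  have := hq.1.1
  have hqm : q ≤ maximalIdeal A • q := fun y hy ↦ by
    obtain ⟨a, rfl⟩ := Ideal.mem_span_singleton.1 (hqx hy)
    exact Submodule.smul_mem_smul hx ((this.mem_or_mem hy).resolve_left (hx' q hq))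
  have hbot : q = ⊥ := Submodule.eq_bot_of_le_smul_of_le_jacobson_bot _ _
      (IsNoetherian.noetherian _) hqm (maximalIdeal_le_jacobson ⊥)
  subst hbot
  exact .of_bot_isPrime A

theorem isDomain_of_isRegularLocalRing [IsRegularLocalRing A] : IsDomain A := by
  obtain ⟨d, hd⟩ : ∃ d : ℕ, ringKrullDim A = d :=
    ⟨_, IsRegularLocalRing.spanFinrank_maximalIdeal.symm⟩
  induction d generalizing A with
  | zero => exact (isField_of_ringKrullDim_eq_zero hd).isDomain
  | succ d ih =>
    obtain ⟨x, hx, hx2, hxq⟩ := exists_mem_maximalIdeal_notMem_sq_notMem_minimalPrimes (A := A)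
      (by rw [hd]; exact_mod_cast d.succ_ne_zero)
    have := isRegularLocalRing_quotient_span_singleton hx hx2
    have hdim := (ringKrullDim_quotient_span_singleton_add_one hx hx2).trans hd
    have : IsDomain (A ⧸ Ideal.span {x}) := ih (ENat.WithBot.add_natCast_cancel.1 hdim)
    have := (Ideal.Quotient.isDomain_iff_prime _).1 this
    exact isDomain_of_isPrime_span_singleton hx hxq

theorem isWeaklyRegular_cons_of_map_mk {rs : List A} (hx : IsSMulRegular A x)
    (hrs : IsWeaklyRegular (A ⧸ Ideal.span {x}) (rs.map (Ideal.Quotient.mk (Ideal.span {x})))) :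
    IsWeaklyRegular A (x :: rs) := by
  have h : Ideal.span {x} = x • (⊤ : Ideal A) := by
    simp [← Submodule.ideal_span_singleton_smul]
  rw [isWeaklyRegular_cons_iff]
  refine ⟨hx, ((Submodule.quotEquivOfEq _ _ h).isWeaklyRegular_congr rs).1 ?_⟩
  exact (isWeaklyRegular_map_algebraMap_iff (A ⧸ Ideal.span {x}) _ rs).1 hrs

theorem ofList_cons_eq_maximalIdeal [IsLocalRing A] [IsLocalRing (A ⧸ Ideal.span {x})] {rs : List A}
    (hrs : Ideal.ofList (rs.map (Ideal.Quotient.mk (Ideal.span {x}))) = maximalIdeal _) :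
    Ideal.ofList (x :: rs) = maximalIdeal A := by
  have := IsLocalHom.of_surjective (Ideal.Quotient.mk (Ideal.span {x})) Ideal.Quotient.mk_surjective
  rw [← maximalIdeal_comap (Ideal.Quotient.mk (Ideal.span {x})), ← hrs, ← Ideal.map_ofList,
    Ideal.comap_map_of_surjective' _ Ideal.Quotient.mk_surjective, Ideal.mk_ker, Ideal.ofList_cons,
    sup_comm]

theorem exists_isWeaklyRegular_ofList_eq_maximalIdeal [IsRegularLocalRing A] :
    ∃ rs : List A, IsWeaklyRegular A rs ∧ Ideal.ofList rs = maximalIdeal A ∧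
      rs.length = ringKrullDim A := by
  obtain ⟨d, hd⟩ : ∃ d : ℕ, ringKrullDim A = d :=
    ⟨_, IsRegularLocalRing.spanFinrank_maximalIdeal.symm⟩
  induction d generalizing A with
  | zero =>
    refine ⟨[], .nil A A, ?_, hd.symm⟩
    rw [Ideal.ofList_nil, isField_iff_maximalIdeal_eq.1 (isField_of_ringKrullDim_eq_zero hd)]
  | succ d ih =>
    obtain ⟨x, hx, hx2, -⟩ := exists_mem_maximalIdeal_notMem_sq_notMem_minimalPrimes (A := A)
      (by rw [hd]; exact_mod_cast d.succ_ne_zero)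
    have := isRegularLocalRing_quotient_span_singleton hx hx2
    have hdim := ringKrullDim_quotient_span_singleton_add_one hx hx2
    obtain ⟨rs', hreg, hgen, hlen⟩ := ih (ENat.WithBot.add_natCast_cancel.1 (hdim.trans hd))
    obtain ⟨rs, rfl⟩ := List.map_surjective_iff.2 Ideal.Quotient.mk_surjective rs'
    have := isDomain_of_isRegularLocalRing (A := A)
    have hx0 : x ≠ 0 := by rintro rfl; exact hx2 (zero_mem _)
    refine ⟨x :: rs, isWeaklyRegular_cons_of_map_mk (IsSMulRegular.of_ne_zero hx0) hreg,
      ofList_cons_eq_maximalIdeal hgen, ?_⟩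
    rw [List.length_map] at hlen
    rw [← hdim, ← hlen, List.length_cons, Nat.cast_succ]

end

/-! ### Localization at a minimal prime of the support -/

section

variable {R : Type*} [CommRing R]

theorem mem_support_quotient {I : Ideal R} {p : PrimeSpectrum R} :
    p ∈ Module.support R (R ⧸ I) ↔ I ≤ p.asIdeal := by
  rw [Module.support_eq_zeroLocus, Ideal.annihilator_quotient, PrimeSpectrum.mem_zeroLocus,
    SetLike.coe_subset_coe]

variable (P : Ideal R) [hP : P.IsPrime]

theorem isSimpleModule_localizedModule_quotient :
    IsSimpleModule (Localization.AtPrime P) (LocalizedModule P.primeCompl (R ⧸ P)) := by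
  rw [isSimpleModule_iff_toSpanSingleton_surjective]
  constructor
  · rw [← not_subsingleton_iff_nontrivial]
    exact fun h ↦ (Module.notMem_support_iff (p := ⟨P, hP⟩)).2 h (mem_support_quotient.2 le_rfl)
  · intro m hm n
    induction m using LocalizedModule.induction_on with | h z s
    induction n using LocalizedModule.induction_on with | h w t
    obtain ⟨z, rfl⟩ := Ideal.Quotient.mk_surjective z
    obtain ⟨w, rfl⟩ := Ideal.Quotient.mk_surjective w
    have hz : z ∈ P.primeCompl := fun hz ↦
      hm (by rw [Ideal.Quotient.eq_zero_iff_mem.2 hz, LocalizedModule.zero_mk])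
    refine ⟨Localization.mk (w * s) (t * ⟨z, hz⟩), ?_⟩
    rw [LinearMap.toSpanSingleton_apply, LocalizedModule.mk_smul_mk, LocalizedModule.mk_eq]
    exact ⟨1, congrArg (Ideal.Quotient.mk P)
      (by ring : 1 * (t * ((w * s) * z)) = 1 * ((t * z * s) * w))⟩

theorem isFiniteLength_localizedModule_of_support [IsNoetherianRing R] (M : Type*)
    [AddCommGroup M] [Module R M] [hM : Module.Finite R M]
    (h : ∀ Q ∈ Module.support R M, ¬ Q < ⟨P, hP⟩) :
    IsFiniteLength (Localization.AtPrime P) (LocalizedModule P.primeCompl M) := by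
  induction hM using IsNoetherianRing.induction_on_isQuotientEquivQuotientPrime R with
  | subsingleton N => exact .of_subsingleton
  | quotient N Q e =>
    by_cases hQP : Q.asIdeal ≤ P
    · have hQ : Q ∈ Module.support R N := by rw [e.support_eq, mem_support_quotient]
      obtain rfl : Q = ⟨P, hP⟩ := by_contra fun hne ↦ h Q hQ (lt_of_le_of_ne hQP hne)
      have := isSimpleModule_localizedModule_quotient P
      exact (Module.length_ne_top_iff.1 (by rw [Module.length_eq_one]; simp)).of_injective
        (f := LocalizedModule.map _ e.toLinearMap) (LocalizedModule.map_injective _ _ e.injective)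
    · have := Module.notMem_support_iff (p := ⟨P, hP⟩) (M := N).1 (by
        rwa [e.support_eq, mem_support_quotient])
      exact .of_subsingleton
  | exact N₁ N₂ N₃ f g hf hg H h₁ h₃ =>
    rw [Module.support_of_exact H hf hg] at h
    rw [← Module.length_ne_top_iff] at h₁ h₃ ⊢
    rw [Module.length_eq_add_of_exact (LocalizedModule.map P.primeCompl f)
      (LocalizedModule.map P.primeCompl g) (LocalizedModule.map_injective _ f hf)
      (LocalizedModule.map_surjective _ g hg) (LocalizedModule.map_exact _ f g H)]
    exact WithTop.add_ne_top.2 ⟨h₁ fun Q hQ ↦ h Q (.inl hQ), h₃ fun Q hQ ↦ h Q (.inr hQ)⟩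

end

theorem length_localizedModule_extMod {R : Type u} [CommRing R] [IsNoetherianRing R] (P : Ideal R)
    [P.IsPrime] [IsRegularLocalRing (Localization.AtPrime P)] {d : ℕ} (hd : P.height = d)
    {M : Type u} [AddCommGroup M] [Module R M] [Module.Finite R M]
    (hM : IsFiniteLength (Localization.AtPrime P) (LocalizedModule P.primeCompl M)) :
    Module.length (Localization.AtPrime P) (LocalizedModule P.primeCompl (ExtMod R M R d)) =
      Module.length (Localization.AtPrime P) (LocalizedModule P.primeCompl M) := by
  obtain ⟨rs, hrs, hmax, hlen⟩ :=
    exists_isWeaklyRegular_ofList_eq_maximalIdeal (A := Localization.AtPrime P)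
  obtain rfl : rs.length = d := by
    rw [IsLocalization.AtPrime.ringKrullDim_eq_height P, hd] at hlen
    exact_mod_cast hlen
  rw [(localizedExtModEquiv P.primeCompl (LocalizedModule.mkLinearMap P.primeCompl M)
    (Algebra.linearMap R (Localization.AtPrime P)) rs.length).length_eq]
  exact length_ext_length_eq_length hrs hmax hM

theorem IsPseudoNull.not_lt_of_mem_support {R : Type*} [CommRing R] {M : Type*} [AddCommGroup M]
    [Module R M] (hM : IsPseudoNull R M) {P Q : PrimeSpectrum R} (hP : Order.height P ≤ 2)
    (hQ : Q ∈ Module.support R M) : ¬ Q < P := fun hQP ↦ by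
  have hheight : Order.height Q + 1 ≤ 1 + 1 := (Order.height_add_one_le hQP).trans hP
  exact Module.notMem_support_iff.2
    (hM Q.asIdeal ((ENat.add_le_add_iff_right ENat.one_ne_top).1 hheight)) hQ

theorem statement9_general {R : Type u} [CommRing R] [IsNoetherianRing R] (P : Ideal R)
    [hP : P.IsPrime] [IsRegularLocalRing (Localization.AtPrime P)] {d : ℕ} (hd : P.height = d)
    (M : Type u) [AddCommGroup M] [Module R M] [Module.Finite R M]
    (hM : ∀ Q ∈ Module.support R M, ¬ Q < ⟨P, hP⟩) :
    locFiniteLength R M P ∧ locFiniteLength R (ExtMod R M R d) P ∧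
      locLength R (ExtMod R M R d) P = locLength R M P := by
  have hfin := isFiniteLength_localizedModule_of_support P M hM
  have hlen := length_localizedModule_extMod P hd hfin
  refine ⟨hfin, Module.length_ne_top_iff.1 (hlen.trans_ne (Module.length_ne_top_iff.2 hfin)), ?_⟩
  rw [locLength, locLength, ← Module.length_eq_height, ← Module.length_eq_height, hlen]

/-- `R` is a commutative Noetherian regular integral domain (regularity expressed
by saying that each localization at a prime is a regular local ring, i.e. its Krull dimension
equals the dimension of its cotangent space), and `M` is a finitely generated pseudo-null
`R`-module.  Then at every height-2 prime `P`, the localizations of `M` and of `Ext²_R(M,R)`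
have finite, equal lengths. -/
theorem statement9 (R : Type u) [CommRing R] [IsDomain R] [IsNoetherianRing R]
    (hreg : ∀ (P : Ideal R) [P.IsPrime],
      ringKrullDim (Localization.AtPrime P) =
        (Module.finrank (IsLocalRing.ResidueField (Localization.AtPrime P))
          (IsLocalRing.CotangentSpace (Localization.AtPrime P)) : ℕ))
    (M : Type u) [AddCommGroup M] [Module R M] [Module.Finite R M]
    (hM : IsPseudoNull R M) :
    ∀ (P : Ideal R) [hP : P.IsPrime], Order.height (⟨P, hP⟩ : PrimeSpectrum R) = 2 →
      locFiniteLength R M P ∧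
      locFiniteLength R (ExtMod R M R 2) P ∧
      locLength R (ExtMod R M R 2) P = locLength R M P := by
  intro P hP hht
  have := (IsRegularLocalRing.iff_finrank_cotangentSpace _).2 (hreg P).symm
  exact statement9_general P ((PrimeSpectrum.height_eq_orderHeight ⟨P, hP⟩).trans hht) M
    fun Q hQ ↦ hM.not_lt_of_mem_support hht.le hQ
end
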